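/- Let p ∈ ℤ[X] be a monic polynomial satisfying 2·|p|_∞ > |p|_1, and let n ≥ 1. Let α be the finite alphabet {c ∈ ℤ : |c| ≤ n}. Then the language L = { c_0 c_1 ⋯ c_m ∈ α* : p divides Σ_{j=0}^m c_j X^j in ℤ[X] } is a regular language over α. -/

import Mathlib

/-- The polynomial `Σ_j c_j X^j` associated to the list of coefficients `c_0 c_1 ⋯ c_m`. -/
noncomputable def listToPoly : List ℤ → Polynomial ℤ
  | [] => 0
  | c :: rest => Polynomial.C c + Polynomial.X * listToPoly rest

/-- `|p|_∞` for an ordinary polynomial. -/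
noncomputable def polyInfNorm (p : Polynomial ℤ) : ℕ :=
  p.support.sup fun i => (p.coeff i).natAbs

/-- `|p|_1` for an ordinary polynomial. -/
noncomputable def polyOneNorm (p : Polynomial ℤ) : ℕ :=
  ∑ i ∈ p.support, (p.coeff i).natAbs

/-!
Suppose a word `w = y x` gives a multiple `p q` of `p`. As one coefficient of `p` outweighs all the
others together, `|q|_∞ ≤ |p q|_∞ ≤ n`. Splitting `q` at `X ^ |y|` shows that the polynomial of `x`
is congruent modulo `p` to the quotient by `X ^ |y|` of `p` times the low-order part of `q`; this
quotient has degree at most `deg p` and coefficients at most `|p|_1 n`. So the words `x` that occur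
as the high-order end of a word of the language leave only finitely many residues modulo `p`, and
the Myhill–Nerode theorem applies to the reversed language.
-/

open Polynomial

section Norms

lemma natAbs_coeff_le_polyInfNorm (p : ℤ[X]) (i : ℕ) : (p.coeff i).natAbs ≤ polyInfNorm p := by
  by_cases hi : i ∈ p.support
  · exact Finset.le_sup (f := fun i ↦ (p.coeff i).natAbs) hi
  · simp [notMem_support_iff.mp hi]

lemma polyInfNorm_le_iff {p : ℤ[X]} {B : ℕ} :
    polyInfNorm p ≤ B ↔ ∀ i, (p.coeff i).natAbs ≤ B :=
  ⟨fun h i ↦ (natAbs_coeff_le_polyInfNorm p i).trans h, fun h ↦ Finset.sup_le fun i _ ↦ h i⟩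

lemma exists_natAbs_coeff_eq_polyInfNorm (p : ℤ[X]) : ∃ i, (p.coeff i).natAbs = polyInfNorm p := by
  rcases p.support.eq_empty_or_nonempty with hp | hp
  · exact ⟨0, by simp [support_eq_empty.mp hp, polyInfNorm]⟩
  · obtain ⟨i, -, hi⟩ := p.support.exists_mem_eq_sup hp fun i ↦ (p.coeff i).natAbs
    exact ⟨i, hi.symm⟩

lemma natAbs_coeff_add_polyOneNorm_erase (p : ℤ[X]) (i : ℕ) :
    (p.coeff i).natAbs + polyOneNorm (p.erase i) = polyOneNorm p := by
  have herase : polyOneNorm (p.erase i) = ∑ j ∈ p.support.erase i, (p.coeff j).natAbs := by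
    rw [polyOneNorm, support_erase]
    exact Finset.sum_congr rfl fun j hj ↦ by rw [erase_ne _ (Finset.ne_of_mem_erase hj)]
  by_cases hi : i ∈ p.support
  · rw [herase, Finset.add_sum_erase _ (fun j ↦ (p.coeff j).natAbs) hi, polyOneNorm]
  · rw [herase, Finset.erase_eq_of_notMem hi, notMem_support_iff.mp hi, Int.natAbs_zero, zero_add,
      polyOneNorm]

lemma polyInfNorm_X_pow_mul_le (k : ℕ) (p : ℤ[X]) : polyInfNorm (X ^ k * p) ≤ polyInfNorm p := by
  refine polyInfNorm_le_iff.mpr fun i ↦ ?_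
  rw [coeff_X_pow_mul']
  split_ifs
  · exact natAbs_coeff_le_polyInfNorm p _
  · exact Nat.zero_le _

lemma polyInfNorm_mul_le (p q : ℤ[X]) : polyInfNorm (p * q) ≤ polyOneNorm p * polyInfNorm q := by
  refine polyInfNorm_le_iff.mpr fun m ↦ ?_
  have hcoeff : (p * q).coeff m = ∑ i ∈ p.support, p.coeff i * (X ^ i * q).coeff m := by
    conv_lhs => rw [p.as_sum_support_C_mul_X_pow]
    simp only [Finset.sum_mul, finsetSum_coeff, mul_assoc, coeff_C_mul]
  calc ((p * q).coeff m).natAbs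
      ≤ ∑ i ∈ p.support, (p.coeff i * (X ^ i * q).coeff m).natAbs :=
        hcoeff ▸ Int.natAbs_sum_le _ _
    _ ≤ ∑ i ∈ p.support, (p.coeff i).natAbs * polyInfNorm q := by
        refine Finset.sum_le_sum fun i _ ↦ ?_
        rw [Int.natAbs_mul]
        gcongr
        exact (natAbs_coeff_le_polyInfNorm _ m).trans (polyInfNorm_X_pow_mul_le i q)
    _ = polyOneNorm p * polyInfNorm q := by rw [polyOneNorm, Finset.sum_mul]

-- This is `(2|p|_∞ - |p|_1) |q|_∞ ≤ |p q|_∞`, with the terms moved so that no subtraction occurs.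
lemma two_mul_polyInfNorm_mul_polyInfNorm_le (p q : ℤ[X]) :
    2 * polyInfNorm p * polyInfNorm q ≤
      polyInfNorm (p * q) + polyOneNorm p * polyInfNorm q := by
  obtain ⟨i, hi⟩ := exists_natAbs_coeff_eq_polyInfNorm p
  obtain ⟨j, hj⟩ := exists_natAbs_coeff_eq_polyInfNorm q
  have hcoeff : p.coeff i * q.coeff j =
      (p * q).coeff (j + i) - (p.erase i * q).coeff (j + i) := by
    rw [← coeff_sub, ← sub_mul, ← eq_sub_of_add_eq (p.monomial_add_erase i), coeff_monomial_mul]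
  have hmax : polyInfNorm p * polyInfNorm q ≤
      polyInfNorm (p * q) + polyOneNorm (p.erase i) * polyInfNorm q :=
    calc polyInfNorm p * polyInfNorm q
        = ((p * q).coeff (j + i) - (p.erase i * q).coeff (j + i)).natAbs := by
          rw [← hi, ← hj, ← Int.natAbs_mul, hcoeff]
      _ ≤ ((p * q).coeff (j + i)).natAbs + ((p.erase i * q).coeff (j + i)).natAbs :=
          Int.natAbs_sub_le _ _
      _ ≤ polyInfNorm (p * q) + polyOneNorm (p.erase i) * polyInfNorm q :=
          add_le_add (natAbs_coeff_le_polyInfNorm _ _)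
            ((natAbs_coeff_le_polyInfNorm _ _).trans (polyInfNorm_mul_le _ _))
  rw [← natAbs_coeff_add_polyOneNorm_erase p i, hi]
  linarith

lemma polyInfNorm_le_polyInfNorm_mul {p : ℤ[X]} (hdom : polyOneNorm p < 2 * polyInfNorm p)
    (q : ℤ[X]) : polyInfNorm q ≤ polyInfNorm (p * q) := by
  have hgap : (polyOneNorm p + 1) * polyInfNorm q ≤ 2 * polyInfNorm p * polyInfNorm q :=
    Nat.mul_le_mul_right _ hdom
  linarith [two_mul_polyInfNorm_mul_polyInfNorm_le p q]

lemma finite_setOf_natDegree_le_polyInfNorm_le (d B : ℕ) :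
    {r : ℤ[X] | r.natDegree ≤ d ∧ polyInfNorm r ≤ B}.Finite := by
  have hbox : (Set.Icc (fun _ ↦ -B) (fun _ ↦ B) : Set (Fin (d + 1) → ℤ)).Finite :=
    Set.finite_Icc _ _
  refine (hbox.image (ofFn (d + 1))).subset fun r ⟨hdeg, hnorm⟩ ↦
    ⟨toFn (d + 1) r, ?_, ofFn_comp_toFn_eq_id_of_natDegree_lt (Nat.lt_succ_of_le hdeg)⟩
  have hcoeff (i : ℕ) : |r.coeff i| ≤ B := by
    rw [Int.abs_eq_natAbs]
    exact_mod_cast polyInfNorm_le_iff.mp hnorm i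
  exact ⟨fun i ↦ (abs_le.mp (hcoeff i)).1, fun i ↦ (abs_le.mp (hcoeff i)).2⟩

end Norms

section HighOrderPart

lemma polyInfNorm_modByMonic_X_pow_le (q : ℤ[X]) (k : ℕ) :
    polyInfNorm (q %ₘ X ^ k) ≤ polyInfNorm q := by
  refine polyInfNorm_le_iff.mpr fun i ↦ ?_
  rcases lt_or_ge i k with hi | hi
  · have hcoeff : (q %ₘ X ^ k).coeff i = q.coeff i := by
      conv_rhs => rw [← modByMonic_add_div q (X ^ k)]
      rw [coeff_add, coeff_X_pow_mul', if_neg hi.not_ge, add_zero]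
    exact hcoeff ▸ natAbs_coeff_le_polyInfNorm q i
  · have hdeg : (q %ₘ X ^ k).degree < k := by
      simpa using degree_modByMonic_lt q (monic_X_pow (R := ℤ) k)
    simp [(degree_lt_iff_coeff_zero _ _).mp hdeg i hi]

lemma exists_dvd_sub_of_add_X_pow_mul_eq_mul {p q x y : ℤ[X]} {k : ℕ} (hy : y.degree < k)
    (h : y + X ^ k * x = p * q) :
    ∃ r, p ∣ x - r ∧ r.natDegree ≤ p.natDegree ∧
      polyInfNorm r ≤ polyOneNorm p * polyInfNorm q := by
  set qLow := q %ₘ X ^ k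
  set qHigh := q /ₘ X ^ k
  have hshift : X ^ k * (x - p * qHigh) = p * qLow - y := by
    linear_combination h - p * modByMonic_add_div q (X ^ k)
  have hcoeff (i : ℕ) : (x - p * qHigh).coeff i = (p * qLow).coeff (i + k) := by
    rw [← coeff_X_pow_mul, hshift, coeff_sub,
      (degree_lt_iff_coeff_zero _ _).mp hy _ (Nat.le_add_left k i), sub_zero]
  have hqLow : qLow.natDegree ≤ k := by
    simpa using natDegree_modByMonic_le q (monic_X_pow (R := ℤ) k)
  refine ⟨x - p * qHigh, by simp, natDegree_le_iff_coeff_eq_zero.mpr fun i hi ↦ ?_,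
    polyInfNorm_le_iff.mpr fun i ↦ ?_⟩
  · rw [hcoeff]
    exact coeff_eq_zero_of_natDegree_lt
      ((natDegree_mul_le_of_le le_rfl hqLow).trans_lt (Nat.add_lt_add_right hi k))
  · calc ((x - p * qHigh).coeff i).natAbs
        ≤ polyInfNorm (p * qLow) := hcoeff i ▸ natAbs_coeff_le_polyInfNorm _ _
      _ ≤ polyOneNorm p * polyInfNorm qLow := polyInfNorm_mul_le _ _
      _ ≤ polyOneNorm p * polyInfNorm q :=
          Nat.mul_le_mul_left _ (polyInfNorm_modByMonic_X_pow_le q k)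

end HighOrderPart

section ListToPoly

lemma coeff_listToPoly (w : List ℤ) (i : ℕ) : (listToPoly w).coeff i = w.getD i 0 := by
  induction w generalizing i with
  | nil => simp [listToPoly]
  | cons c w ih =>
    cases i with
    | zero => simp [listToPoly]
    | succ i =>
      rw [listToPoly, coeff_add, coeff_C_succ, coeff_X_mul, ih, zero_add, List.getD_cons_succ]

lemma degree_listToPoly_lt (w : List ℤ) : (listToPoly w).degree < w.length :=
  (degree_lt_iff_coeff_zero _ _).mpr fun i hi ↦ by
    rw [coeff_listToPoly, List.getD_eq_default _ _ hi]

lemma polyInfNorm_listToPoly_le {w : List ℤ} {n : ℕ} (hw : ∀ c ∈ w, c.natAbs ≤ n) :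
    polyInfNorm (listToPoly w) ≤ n := by
  refine polyInfNorm_le_iff.mpr fun i ↦ ?_
  rw [coeff_listToPoly]
  rcases lt_or_ge i w.length with hi | hi
  · rw [List.getD_eq_getElem _ _ hi]
    exact hw _ (List.getElem_mem hi)
  · rw [List.getD_eq_default _ _ hi]
    exact Nat.zero_le n

lemma listToPoly_append (u v : List ℤ) :
    listToPoly (u ++ v) = listToPoly u + X ^ u.length * listToPoly v := by
  induction u with
  | nil => simp [listToPoly]
  | cons c u ih =>
    simp only [List.cons_append, listToPoly, ih, List.length_cons]
    ring

end ListToPoly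

section Language

variable {α : Type*}

/-- The words whose polynomial is a multiple of `p`, where a letter `a` stands for the coefficient
`digit a`. -/
def multiplesLanguage (p : ℤ[X]) (digit : α → ℤ) : Language α :=
  {w | p ∣ listToPoly (w.map digit)}

/-- The words which, read from the high-order end, complete the high-order part `x` to a multiple of
`p`. For `x` the polynomial of a word these are the left quotients of the reversed
`multiplesLanguage`. -/
def lowOrderCompletions (p : ℤ[X]) (digit : α → ℤ) (x : ℤ[X]) : Language α :=
  {v | p ∣ listToPoly (v.reverse.map digit) + X ^ v.length * x}

lemma leftQuotient_reverse_multiplesLanguage (p : ℤ[X]) (digit : α → ℤ) (u : List α) :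
    (multiplesLanguage p digit).reverse.leftQuotient u =
      lowOrderCompletions p digit (listToPoly (u.reverse.map digit)) := by
  ext v
  change p ∣ listToPoly ((u ++ v).reverse.map digit) ↔ p ∣ _
  rw [List.reverse_append, List.map_append, listToPoly_append, List.length_map,
    List.length_reverse]

lemma lowOrderCompletions_congr {p x y : ℤ[X]} (digit : α → ℤ) (h : p ∣ x - y) :
    lowOrderCompletions p digit x = lowOrderCompletions p digit y := by
  ext v
  refine dvd_iff_dvd_of_dvd_sub ?_
  rw [add_sub_add_left_eq_sub, ← mul_sub]
  exact h.mul_left _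

lemma exists_lowOrderCompletions_eq_of_mem {p : ℤ[X]} {digit : α → ℤ} {n B : ℕ}
    (hdigit : ∀ a, (digit a).natAbs ≤ n)
    (hquot : ∀ q, polyInfNorm (p * q) ≤ n → polyInfNorm q ≤ B) {u v : List α}
    (hv : v ∈ lowOrderCompletions p digit (listToPoly (u.map digit))) :
    ∃ r : ℤ[X], (r.natDegree ≤ p.natDegree ∧ polyInfNorm r ≤ polyOneNorm p * B) ∧
      lowOrderCompletions p digit r = lowOrderCompletions p digit (listToPoly (u.map digit)) := by
  obtain ⟨q, hq⟩ := hv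
  have hword : listToPoly ((v.reverse ++ u).map digit) = p * q := by
    rw [List.map_append, listToPoly_append, List.length_map, List.length_reverse, hq]
  have hbound : polyInfNorm (p * q) ≤ n :=
    hword ▸ polyInfNorm_listToPoly_le (List.forall_mem_map.mpr fun a _ ↦ hdigit a)
  have hdeg : (listToPoly (v.reverse.map digit)).degree < v.length := by
    simpa using degree_listToPoly_lt (v.reverse.map digit)
  obtain ⟨r, hdvd, hrdeg, hrnorm⟩ := exists_dvd_sub_of_add_X_pow_mul_eq_mul hdeg hq
  exact ⟨r, ⟨hrdeg, hrnorm.trans (Nat.mul_le_mul_left _ (hquot q hbound))⟩,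
    (lowOrderCompletions_congr digit hdvd).symm⟩

theorem isRegular_multiplesLanguage {p : ℤ[X]} {digit : α → ℤ} {n B : ℕ}
    (hdigit : ∀ a, (digit a).natAbs ≤ n)
    (hquot : ∀ q, polyInfNorm (p * q) ≤ n → polyInfNorm q ≤ B) :
    (multiplesLanguage p digit).IsRegular := by
  have hfinite := (finite_setOf_natDegree_le_polyInfNorm_le p.natDegree (polyOneNorm p * B)).image
    (lowOrderCompletions p digit)
  refine .of_reverse (.of_finite_range_leftQuotient ((hfinite.insert 0).subset ?_))
  rintro _ ⟨u, rfl⟩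
  rw [leftQuotient_reverse_multiplesLanguage]
  rcases Set.eq_empty_or_nonempty
    (lowOrderCompletions p digit (listToPoly (u.reverse.map digit))) with hempty | ⟨v, hv⟩
  · exact Or.inl hempty
  · exact Or.inr (exists_lowOrderCompletions_eq_of_mem hdigit hquot hv)

theorem divisibility_language_regular_general {p : ℤ[X]}
    (hdom : polyOneNorm p < 2 * polyInfNorm p) {digit : α → ℤ} {n : ℕ}
    (hdigit : ∀ a, (digit a).natAbs ≤ n) :
    Language.IsRegular {w : List α | p ∣ listToPoly (w.map digit)} :=
  isRegular_multiplesLanguage hdigit fun q hq ↦ (polyInfNorm_le_polyInfNorm_mul hdom q).trans hq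

end Language

/-- (Key step of Lemma 4.10.) If `p ∈ ℤ[X]` is monic with `2|p|_∞ > |p|_1` and `n ≥ 1`,
then the language of strings `c_0 c_1 ⋯ c_m` over the alphabet `{c ∈ ℤ : |c| ≤ n}` such
that `p` divides `Σ_j c_j X^j` in `ℤ[X]` is regular. -/
theorem divisibility_language_regular
    (p : Polynomial ℤ) (hmonic : p.Monic) (hdom : polyOneNorm p < 2 * polyInfNorm p)
    (n : ℕ) (hn : 1 ≤ n) :
    Language.IsRegular
      {w : List {c : ℤ // c.natAbs ≤ n} | p ∣ listToPoly (w.map Subtype.val)} := by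
  exact divisibility_language_regular_general hdom fun c ↦ c.2
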